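/- arXiv:1509.08019 — 12 statements merged into one kernel-verified Lean document; each statement's English description precedes it below -/
import Mathlib

section
/- Suppose Φ_λ is twice continuously Fréchet differentiable on W \ {0}. If u₀ is a local minimizer of Φ_λ restricted to the scalar Nehari manifold N_λ and D²Φ_λ(u₀)(u₀,u₀) + DΦ_λ(u₀)(u₀) ≠ 0 (equivalently, since u₀ ∈ N_λ, D²Φ_λ(u₀)(u₀,u₀) ≠ 0), then DΦ_λ(u₀) = 0, i.e. u₀ is a critical point of Φ_λ. -/
/-!
Put `f u = DΦ(u)(u)`, which is `C¹` away from `0`, with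
`Df(u₀)(v) = D²Φ(u₀)(v, u₀) + DΦ(u₀)(v)`. Near `u₀ ≠ 0` the Nehari manifold is the level set
`{f = f u₀}`, so the Lagrange multiplier theorem gives `(a, b) ≠ (0, 0)` with
`a Df(u₀) + b DΦ(u₀) = 0`. Evaluating at `u₀`, where `DΦ(u₀)(u₀) = 0` and `Df(u₀)(u₀) ≠ 0`,
yields `a = 0`; hence `b ≠ 0` and `DΦ(u₀) = 0`.
-/

/-- If `u₀` is a local minimizer of `Φ_λ` restricted to the scalar Nehari
manifold `N_λ` and `D²Φ_λ(u₀)(u₀,u₀) + DΦ_λ(u₀)(u₀) ≠ 0`, then `DΦ_λ(u₀) = 0`. -/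
theorem stmt0
    {W : Type*} [NormedAddCommGroup W] [NormedSpace ℝ W] [CompleteSpace W]
    (T G : W → ℝ) (lam : ℝ)
    (Φ : W → ℝ) (hΦ : Φ = fun u => T u - lam * G u)
    (hC2 : ContDiffOn ℝ 2 Φ {(0 : W)}ᶜ)
    (N : Set W) (hN : N = {u : W | u ≠ 0 ∧ fderiv ℝ Φ u u = 0})
    (u₀ : W) (hu₀ : u₀ ∈ N)
    (hmin : IsLocalMinOn Φ N u₀)
    (hnd : fderiv ℝ (fderiv ℝ Φ) u₀ u₀ u₀ + fderiv ℝ Φ u₀ u₀ ≠ 0) :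
    fderiv ℝ Φ u₀ = 0 := by
  clear hΦ
  subst hN
  obtain ⟨hne, hz⟩ := hu₀
  have hnhds : ({(0 : W)}ᶜ : Set W) ∈ nhds u₀ := isOpen_compl_singleton.mem_nhds hne
  have hC : ContDiffAt ℝ 2 Φ u₀ := hC2.contDiffAt hnhds
  have hΦ' : HasStrictFDerivAt Φ (fderiv ℝ Φ u₀) u₀ := hC.hasStrictFDerivAt (by norm_num)
  have hD : ContDiffAt ℝ 1 (fderiv ℝ Φ) u₀ := hC.fderiv_right (by norm_num)
  have hD' : HasStrictFDerivAt (fderiv ℝ Φ) (fderiv ℝ (fderiv ℝ Φ) u₀) u₀ :=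
    hD.hasStrictFDerivAt (by norm_num)
  have hf := hD'.clm_apply (hasStrictFDerivAt_id u₀)
  -- The level set `{f = f u₀}` is `N ∪ {0}`, which coincides with `N` near `u₀`.
  have hext : IsLocalExtrOn Φ {x | fderiv ℝ Φ x (id x) = fderiv ℝ Φ u₀ (id u₀)} u₀ := by
    left
    have h1 := eventually_nhdsWithin_iff.1 hmin
    refine eventually_nhdsWithin_iff.2 ?_
    filter_upwards [h1, hnhds] with x hx hx0 hxm
    exact hx ⟨hx0, hxm.trans hz⟩
  obtain ⟨a, b, hab, h⟩ := hext.exists_multipliers_of_hasStrictFDerivAt_1d hf hΦ'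
  have hev := congrArg (fun L : W →L[ℝ] ℝ => L u₀) h
  simp [hz] at hev hnd
  have ha : a = 0 := by tauto
  subst ha
  have hb : b ≠ 0 := by simpa using hab
  simpa [hb] using h
end

section
/- If u₀ ∈ N_λ is a local minimizer of Φ_λ restricted to the vector Nehari manifold N_λ and det J(u₀) ≠ 0, then D_{u_i}Φ_λ(u₀) = 0 for every i = 1,…,n; that is, u₀ is a critical point of Φ_λ. -/
/-!
The Nehari manifold is, near `u₀`, the zero set of the `n` constraints
`f_j(u) = D_{u_j}Φ(u)(u_j)`, and the derivative of `f_j` at `u₀` in the direction of the `i`-th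
component `u₀_i` is exactly `J i j`. The Lagrange multiplier theorem gives `(Λ, Λ₀) ≠ 0` with
`∑ j, Λ_j f_j'(u₀) + Λ₀ Φ'(u₀) = 0`. Testing against these `n` directions, along which `Φ'(u₀)`
vanishes, yields `J Λ = 0`. Since `det J ≠ 0`, `Λ = 0`, hence `Λ₀ ≠ 0` and `Φ'(u₀) = 0`.
-/

open Topology

/-- vector Nehari manifold method. If `u₀` is a local minimizer of `Φ_λ`
restricted to the vector Nehari manifold and `det J(u₀) ≠ 0`, then all partial
derivatives of `Φ_λ` at `u₀` vanish. -/
theorem stmt1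
    {n : ℕ} (hn : 1 ≤ n)
    {W : Fin n → Type*} [∀ i, NormedAddCommGroup (W i)] [∀ i, NormedSpace ℝ (W i)]
    [∀ i, CompleteSpace (W i)]
    (T G : (∀ i, W i) → ℝ) (lam : ℝ)
    (Φ : (∀ i, W i) → ℝ) (hΦ : Φ = fun u => T u - lam * G u)
    (hC2 : ContDiffOn ℝ 2 Φ {u : ∀ i, W i | ∀ i, u i ≠ 0})
    (N : Set (∀ i, W i))
    (hN : N = {u : ∀ i, W i | (∀ i, u i ≠ 0) ∧
      ∀ i, fderiv ℝ Φ u (Pi.single i (u i)) = 0})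
    (u₀ : ∀ i, W i) (hu₀ : u₀ ∈ N)
    (hmin : IsLocalMinOn Φ N u₀)
    (J : Matrix (Fin n) (Fin n) ℝ)
    (hJ : ∀ i j, J i j =
      fderiv ℝ (fderiv ℝ Φ) u₀ (Pi.single i (u₀ i)) (Pi.single j (u₀ j))
        + if i = j then fderiv ℝ Φ u₀ (Pi.single j (u₀ j)) else 0)
    (hdet : J.det ≠ 0) :
    ∀ i, ∀ v : W i, fderiv ℝ Φ u₀ (Pi.single i v) = 0 := by
  subst hN
  obtain ⟨hne, hcrit⟩ := hu₀
  have hopen : IsOpen {u : ∀ i, W i | ∀ i, u i ≠ 0} := by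
    simp only [Set.ofPred_forall]
    exact isOpen_iInter_of_finite fun i => isOpen_ne_fun (continuous_apply i) continuous_const
  have hnhds : {u : ∀ i, W i | ∀ i, u i ≠ 0} ∈ 𝓝 u₀ := hopen.mem_nhds hne
  have hC : ContDiffAt ℝ 2 Φ u₀ := hC2.contDiffAt hnhds
  have hφ' : HasStrictFDerivAt Φ (fderiv ℝ Φ u₀) u₀ := hC.hasStrictFDerivAt (by norm_num)
  have hD : HasStrictFDerivAt (fderiv ℝ Φ) (fderiv ℝ (fderiv ℝ Φ) u₀) u₀ :=
    (hC.fderiv_right (m := 1) (by norm_num)).hasStrictFDerivAt (by norm_num)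
  -- `P j` is the projection of the product onto its `j`-th factor.
  let P : Fin n → ((∀ i, W i) →L[ℝ] (∀ i, W i)) := fun j =>
    (ContinuousLinearMap.single ℝ W j).comp (ContinuousLinearMap.proj j)
  have hP : ∀ j u, P j u = Pi.single j (u j) := fun j u => rfl
  have hf : ∀ j, HasStrictFDerivAt (fun u => fderiv ℝ Φ u (P j u))
      ((fderiv ℝ Φ u₀).comp (P j) + (fderiv ℝ (fderiv ℝ Φ) u₀).flip (P j u₀)) u₀ :=
    fun j => hD.clm_apply (P j).hasStrictFDerivAt
  have hextr : IsLocalExtrOn Φ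
      {u | ∀ j, fderiv ℝ Φ u (P j u) = fderiv ℝ Φ u₀ (P j u₀)} u₀ := by
    left
    have h1 := eventually_nhdsWithin_iff.mp hmin
    refine eventually_nhdsWithin_iff.mpr ?_
    filter_upwards [h1, hnhds] with u hu hu' hu''
    exact hu ⟨hu', fun j => (hu'' j).trans (hcrit j)⟩
  obtain ⟨Λ, Λ₀, hΛ, hsum⟩ := hextr.exists_multipliers_of_hasStrictFDerivAt hf hφ'
  have hJΛ : J.mulVec Λ = 0 := by
    ext i
    have h := DFunLike.congr_fun hsum (Pi.single i (u₀ i))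
    simp only [add_apply, sum_apply,
      smul_apply, ContinuousLinearMap.comp_apply,
      ContinuousLinearMap.flip_apply, hP, hcrit i, smul_eq_mul, mul_zero, add_zero,
      zero_apply] at h
    rw [Pi.zero_apply, ← h, Matrix.mulVec_eq_sum, Finset.sum_apply]
    refine Finset.sum_congr rfl fun j _ => ?_
    simp only [Pi.smul_apply, Matrix.transpose_apply, op_smul_eq_smul, smul_eq_mul]
    rw [hJ, add_comm]
    congr 2
    split_ifs with hij
    · subst hij
      simp
    · rw [Pi.single_eq_of_ne (Ne.symm hij)]
      simp
  have hΛ0 : Λ = 0 := Matrix.eq_zero_of_mulVec_eq_zero hdet hJΛ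
  subst hΛ0
  have hΛ₀ : Λ₀ ≠ 0 := fun h => hΛ (by simp [h])
  have hzero : fderiv ℝ Φ u₀ = 0 := by simpa [hΛ₀] using hsum
  intro i v
  simp [hzero]
end

section
/- Let Φ : W → ℝ be twice continuously Fréchet differentiable on W \ {0}. Let v₀ ∈ W \ {0} and t₀ > 0 satisfy DΦ(t₀v₀)(v₀) = 0 and D²Φ(t₀v₀)(v₀,v₀) ≠ 0. Then there exist an open neighborhood U of v₀ in W, a number ε > 0, and a continuously differentiable map τ : U → (0,∞) with τ(v₀) = t₀ such that DΦ(τ(v)v)(v) = 0 for every v ∈ U; moreover τ is locally unique: for every v ∈ U and every t with |t − t₀| < ε, DΦ(tv)(v) = 0 implies t = τ(v). -/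
/-!
The claim is the implicit function theorem for `F (v, t) = DΦ(t v)(v)` on `W × ℝ` at `(v₀, t₀)`.
Since `Φ` is `C²` near `t₀ v₀ ≠ 0`, the map `F` is `C¹` near `(v₀, t₀)`, and by the chain rule
`∂F/∂t (v₀, t₀) = D²Φ(t₀ v₀)(v₀, v₀) ≠ 0`, which is invertible as a linear map `ℝ → ℝ`.
-/

/-- local existence and uniqueness of a `C¹` fibering map `τ` solving
`DΦ(τ(v)v)(v) = 0` near a nondegenerate critical point of the fibering map. -/
theorem stmt2
    {W : Type*} [NormedAddCommGroup W] [NormedSpace ℝ W] [CompleteSpace W]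
    (Φ : W → ℝ) (hC2 : ContDiffOn ℝ 2 Φ {(0 : W)}ᶜ)
    (v₀ : W) (hv₀ : v₀ ≠ 0) (t₀ : ℝ) (ht₀ : 0 < t₀)
    (hcrit : fderiv ℝ Φ (t₀ • v₀) v₀ = 0)
    (hnd : fderiv ℝ (fderiv ℝ Φ) (t₀ • v₀) v₀ v₀ ≠ 0) :
    ∃ (U : Set W) (ε : ℝ) (τ : W → ℝ),
      IsOpen U ∧ v₀ ∈ U ∧ 0 < ε ∧ ContDiffOn ℝ 1 τ U ∧ τ v₀ = t₀ ∧
      (∀ v ∈ U, 0 < τ v) ∧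
      (∀ v ∈ U, fderiv ℝ Φ (τ v • v) v = 0) ∧
      (∀ v ∈ U, ∀ t : ℝ, |t - t₀| < ε → fderiv ℝ Φ (t • v) v = 0 → t = τ v) := by
  have hne : t₀ • v₀ ≠ 0 := smul_ne_zero ht₀.ne' hv₀
  have hΦ : ContDiffAt ℝ 2 Φ (t₀ • v₀) :=
    hC2.contDiffAt (isOpen_compl_singleton.mem_nhds hne)
  have hD : ContDiffAt ℝ 1 (fderiv ℝ Φ) (t₀ • v₀) :=
    hΦ.fderiv_right (by norm_num)
  let F : W × ℝ → ℝ := fun p => fderiv ℝ Φ (p.2 • p.1) p.1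
  have hF : ContDiffAt ℝ 1 F (v₀, t₀) := by
    have hsmul : ContDiffAt ℝ 1 (fun p : W × ℝ => p.2 • p.1) (v₀, t₀) := by fun_prop
    exact (ContDiffAt.comp (v₀, t₀) (g := fderiv ℝ Φ) hD hsmul).clm_apply contDiffAt_fst
  have hF₀ : F (v₀, t₀) = 0 := hcrit
  -- The partial derivative in `t`, read off along the line `t ↦ (v₀, t)` in two ways.
  have hpartial : (fderiv ℝ F (v₀, t₀) ∘L .inr ℝ W ℝ) 1 =
      fderiv ℝ (fderiv ℝ Φ) (t₀ • v₀) v₀ v₀ := by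
    have h1 : HasDerivAt (fun t : ℝ => F (v₀, t)) (fderiv ℝ F (v₀, t₀) (0, 1)) t₀ :=
      (hF.differentiableAt one_ne_zero).hasFDerivAt.comp_hasDerivAt t₀
        ((hasDerivAt_const t₀ v₀).prodMk (hasDerivAt_id t₀))
    have hline : HasDerivAt (fun t : ℝ => t • v₀) v₀ t₀ := by
      simpa using (hasDerivAt_id t₀).smul_const v₀
    have h2 : HasDerivAt (fun t : ℝ => F (v₀, t))
        (fderiv ℝ (fderiv ℝ Φ) (t₀ • v₀) v₀ v₀) t₀ := by
      have h3 := ((hD.differentiableAt one_ne_zero).hasFDerivAt.comp_hasDerivAt t₀ hline)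
      simpa using h3.clm_apply (hasDerivAt_const t₀ v₀)
    simpa using h1.unique h2
  have hinv : (fderiv ℝ F (v₀, t₀) ∘L .inr ℝ W ℝ).IsInvertible := by
    refine ⟨ContinuousLinearEquiv.unitsEquivAut ℝ (Units.mk0 _ hnd), ?_⟩
    ext
    rw [hpartial]
    simp
  let τ := hF.implicitFunction one_ne_zero hinv
  have hτ₀ : τ v₀ = t₀ := hF.implicitFunction_apply_self one_ne_zero hinv
  have hτ : ContDiffAt ℝ 1 τ v₀ := hF.contDiffAt_implicitFunction one_ne_zero hinv
  have hsol : ∀ᶠ v in nhds v₀, F (v, τ v) = F (v₀, t₀) :=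
    hF.eventually_apply_implicitFunction one_ne_zero hinv
  have huniq : ∀ᶠ p in nhds (v₀, t₀), F p = F (v₀, t₀) ↔ τ p.1 = p.2 :=
    hF.eventually_apply_eq_iff_implicitFunction one_ne_zero hinv
  have hpos : ∀ᶠ v in nhds v₀, 0 < τ v :=
    hτ.continuousAt.eventually (lt_mem_nhds (hτ₀.symm ▸ ht₀))
  have hsmooth : ∀ᶠ v in nhds v₀, ContDiffAt ℝ 1 τ v := hτ.eventually (by simp)
  rw [nhds_prod_eq] at huniq
  obtain ⟨pa, ha, pb, hb, hab⟩ := Filter.eventually_prod_iff.1 huniq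
  obtain ⟨ε, hε, hball⟩ := Metric.eventually_nhds_iff.1 hb
  obtain ⟨U, hU, hUo, hvU⟩ :=
    eventually_nhds_iff.1 (hsol.and (ha.and (hpos.and hsmooth)))
  refine ⟨U, ε, τ, hUo, hvU, hε, fun v hv => (hU v hv).2.2.2.contDiffWithinAt, hτ₀,
    fun v hv => (hU v hv).2.2.1, fun v hv => (hU v hv).1.trans hF₀, fun v hv t ht h => ?_⟩
  have hiff := hab (hU v hv).2.1 (hball (y := t) (by rwa [Real.dist_eq]))
  exact (hiff.1 (Eq.trans h hF₀.symm)).symm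
end

section
/- Let T, G be twice continuously Fréchet differentiable on W \ {0}, let u ≠ 0 be such that DG(su)(su) > 0 for all s > 0, and let t > 0. Then: (i) tu ∈ N_λ if and only if λ = r(tu). Moreover, setting λ := r(tu): (ii) the derivative of s ↦ r(su) at s = t is negative if and only if the second derivative of s ↦ Φ_λ(su) at s = t is negative; and (iii) the derivative of s ↦ r(su) at s = t is positive if and only if the second derivative of s ↦ Φ_λ(su) at s = t is positive. (If instead DG(su)(su) < 0 for all s > 0, the equivalences hold with the sign of the second derivative of s ↦ Φ_λ(su) reversed.) -/
/-!
Write `a s = DT(su)(u)` and `b s = DG(su)(u)`. By homogeneity in the last argument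
`r(su) = a s / b s` for `s > 0`, while `s ↦ Φ_λ(su)` has derivative `a - λ b`. At `s = t` with
`λ = a t / b t`, the quotient rule gives
`(a / b)' = (a' b - a b') / b² = (a' - λ b') / b`, so the second derivative of `s ↦ Φ_λ(su)`
equals `b t * (d/ds) r(su)`, and the sign of `b t` is that of `DG(tu)(tu) = t * b t`.
-/

lemma hasDerivAt_ray {W : Type*} [NormedAddCommGroup W] [NormedSpace ℝ W] {F : W → ℝ}
    (hF : ContDiffOn ℝ 2 F {(0 : W)}ᶜ) {u : W} (hu : u ≠ 0) {s : ℝ} (hs : 0 < s) :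
    HasDerivAt (fun s : ℝ => F (s • u)) (fderiv ℝ F (s • u) u) s := by
  have hsu : s • u ≠ 0 := smul_ne_zero hs.ne' hu
  have hd : DifferentiableAt ℝ F (s • u) :=
    (hF.contDiffAt (isOpen_compl_singleton.mem_nhds hsu)).differentiableAt (by norm_num)
  have hl : HasDerivAt (fun s : ℝ => s • u) u s := by
    simpa using (hasDerivAt_id s).smul_const u
  exact hd.hasFDerivAt.comp_hasDerivAt s hl

lemma differentiableAt_fderiv_ray {W : Type*} [NormedAddCommGroup W] [NormedSpace ℝ W]
    {F : W → ℝ} (hF : ContDiffOn ℝ 2 F {(0 : W)}ᶜ) {u : W} (hu : u ≠ 0) {s : ℝ} (hs : 0 < s) :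
    DifferentiableAt ℝ (fun s : ℝ => fderiv ℝ F (s • u) u) s := by
  have hsu : s • u ≠ 0 := smul_ne_zero hs.ne' hu
  have hd : DifferentiableAt ℝ (fderiv ℝ F) (s • u) :=
    ((hF.contDiffAt (isOpen_compl_singleton.mem_nhds hsu)).fderiv_right
      (m := 1) (by norm_num)).differentiableAt (by norm_num)
  have hl : DifferentiableAt ℝ (fun s : ℝ => s • u) s := by fun_prop
  exact (hd.comp s hl).clm_apply (differentiableAt_const u)

/-- `tu ∈ N_λ` iff `λ = r(tu)`, and (with `λ := r(tu)`) the sign of the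
derivative of `s ↦ r(su)` at `s = t` matches (resp. is opposite to) the sign of the
second derivative of `s ↦ Φ_λ(su)` at `s = t` when `DG(su)(su) > 0` (resp. `< 0`). -/
theorem stmt4
    {W : Type*} [NormedAddCommGroup W] [NormedSpace ℝ W]
    (T G : W → ℝ)
    (hT : ContDiffOn ℝ 2 T {(0 : W)}ᶜ) (hG : ContDiffOn ℝ 2 G {(0 : W)}ᶜ)
    (r : W → ℝ) (hr : ∀ v, r v = fderiv ℝ T v v / fderiv ℝ G v v)
    (u : W) (hu : u ≠ 0)
    (hGne : ∀ s : ℝ, 0 < s → fderiv ℝ G (s • u) (s • u) ≠ 0)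
    (t : ℝ) (ht : 0 < t) :
    (∀ lam : ℝ,
      ((t • u ≠ 0 ∧ fderiv ℝ (fun x => T x - lam * G x) (t • u) (t • u) = 0) ↔
        lam = r (t • u))) ∧
    ((∀ s : ℝ, 0 < s → 0 < fderiv ℝ G (s • u) (s • u)) →
      ((deriv (fun s => r (s • u)) t < 0 ↔
          deriv (deriv (fun s => T (s • u) - r (t • u) * G (s • u))) t < 0) ∧
       (0 < deriv (fun s => r (s • u)) t ↔
          0 < deriv (deriv (fun s => T (s • u) - r (t • u) * G (s • u))) t))) ∧
    ((∀ s : ℝ, 0 < s → fderiv ℝ G (s • u) (s • u) < 0) →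
      ((deriv (fun s => r (s • u)) t < 0 ↔
          0 < deriv (deriv (fun s => T (s • u) - r (t • u) * G (s • u))) t) ∧
       (0 < deriv (fun s => r (s • u)) t ↔
          deriv (deriv (fun s => T (s • u) - r (t • u) * G (s • u))) t < 0))) := by
  have hsu : t • u ≠ 0 := smul_ne_zero ht.ne' hu
  have hmem := isOpen_compl_singleton.mem_nhds hsu
  have hTd : DifferentiableAt ℝ T (t • u) :=
    (hT.contDiffAt hmem).differentiableAt (by norm_num)
  have hGd : DifferentiableAt ℝ G (t • u) :=
    (hG.contDiffAt hmem).differentiableAt (by norm_num)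
  have hb : ∀ s : ℝ, 0 < s → fderiv ℝ G (s • u) u ≠ 0 := fun s hs h =>
    hGne s hs (by rw [map_smul, h, smul_zero])
  have hrs : ∀ s : ℝ, 0 < s → r (s • u) = fderiv ℝ T (s • u) u / fderiv ℝ G (s • u) u := by
    intro s hs
    rw [hr, map_smul, map_smul, smul_eq_mul, smul_eq_mul, mul_div_mul_left _ _ hs.ne']
  have key : deriv (deriv (fun s => T (s • u) - r (t • u) * G (s • u))) t
      = fderiv ℝ G (t • u) u * deriv (fun s => r (s • u)) t := by
    have hpos : ∀ᶠ s : ℝ in nhds t, 0 < s := lt_mem_nhds ht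
    have ha' := (differentiableAt_fderiv_ray hT hu ht).hasDerivAt
    have hb' := (differentiableAt_fderiv_ray hG hu ht).hasDerivAt
    have e1 : deriv (fun s => T (s • u) - r (t • u) * G (s • u)) =ᶠ[nhds t]
        fun s => fderiv ℝ T (s • u) u - r (t • u) * fderiv ℝ G (s • u) u := by
      filter_upwards [hpos] with s hs
      exact ((hasDerivAt_ray hT hu hs).sub ((hasDerivAt_ray hG hu hs).const_mul _)).deriv
    have e2 : (fun s => r (s • u)) =ᶠ[nhds t]
        fun s => fderiv ℝ T (s • u) u / fderiv ℝ G (s • u) u := by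
      filter_upwards [hpos] with s hs
      exact hrs s hs
    have d1 := (ha'.sub (hb'.const_mul (r (t • u)))).deriv
    have d2 := (ha'.div hb' (hb t ht)).deriv
    rw [e1.deriv_eq, e2.deriv_eq]
    refine d1.trans (Eq.trans ?_ (congrArg _ d2.symm))
    rw [hrs t ht]
    have := hb t ht
    field_simp
  have hGt : fderiv ℝ G (t • u) (t • u) = t * fderiv ℝ G (t • u) u := by
    rw [map_smul, smul_eq_mul]
  refine ⟨fun lam => ?_, fun h => ?_, fun h => ?_⟩
  · have hf : fderiv ℝ (fun x => T x - lam * G x) (t • u)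
        = fderiv ℝ T (t • u) - lam • fderiv ℝ G (t • u) :=
      (hTd.hasFDerivAt.sub (hGd.hasFDerivAt.const_mul lam)).fderiv
    rw [hf, hr, eq_div_iff (hGne t ht), and_iff_right hsu]
    simp only [ContinuousLinearMap.sub_apply, ContinuousLinearMap.smul_apply, smul_eq_mul]
    rw [sub_eq_zero, eq_comm]
  · have hpos : 0 < fderiv ℝ G (t • u) u := pos_of_mul_pos_right (hGt ▸ h t ht) ht.le
    rw [key]
    exact ⟨⟨mul_neg_of_pos_of_neg hpos, fun h => by nlinarith⟩, (mul_pos_iff_of_pos_left hpos).symm⟩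
  · have hneg : fderiv ℝ G (t • u) u < 0 := by
      have := h t ht
      rw [hGt] at this
      nlinarith
    rw [key]
    exact ⟨⟨mul_pos_of_neg_of_neg hneg, fun h => by nlinarith⟩,
      ⟨mul_neg_of_neg_of_pos hneg, fun h => by nlinarith⟩⟩
end

section
/- Suppose T and G are twice continuously Fréchet differentiable on W \ {0}. Let u ≠ 0 with DG(u)(u) ≠ 0 and set λ := r(u), so that u ∈ N_λ. Then Dr(u)(u) = D²Φ_λ(u)(u,u) / DG(u)(u), where Dr(u) denotes the Fréchet derivative of the Rayleigh quotient r at u. -/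
/-!
Write `a = DT(u)(u)` and `b = DG(u)(u)`. Since `v ↦ DF(v)(v)` has derivative
`D²F(u)(u,u) + DF(u)(u)` at `u` in the direction `u` (`hasFDerivAt_fderiv_apply_self`), the
quotient rule gives `Dr(u)(u) = ((D²T(u)(u,u) + a) b - a (D²G(u)(u,u) + b)) / b²`. The first-order
terms `a b` cancel, and `a / b = λ` turns the rest into `(D²T(u)(u,u) - λ D²G(u)(u,u)) / b`.
-/

/-- The derivative at `u` of `v ↦ DF(v)(v)` is `w ↦ DF(u)(w) + D²F(u)(w,u)`. -/
lemma hasFDerivAt_fderiv_apply_self {W : Type*} [NormedAddCommGroup W] [NormedSpace ℝ W]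
    {F : W → ℝ} {u : W} (h : DifferentiableAt ℝ (fderiv ℝ F) u) :
    HasFDerivAt (fun v => fderiv ℝ F v v)
      ((fderiv ℝ F u).comp (ContinuousLinearMap.id ℝ W) + (fderiv ℝ (fderiv ℝ F) u).flip u) u :=
  h.hasFDerivAt.clm_apply (hasFDerivAt_id u)

/-- the main identity `Dr(u)(u) = D²Φ_λ(u)(u,u) / DG(u)(u)` for
`λ := r(u)` (so that `u ∈ N_λ`). -/
theorem stmt5
    {W : Type*} [NormedAddCommGroup W] [NormedSpace ℝ W]
    (T G : W → ℝ)
    (hT : ContDiffOn ℝ 2 T {(0 : W)}ᶜ) (hG : ContDiffOn ℝ 2 G {(0 : W)}ᶜ)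
    (r : W → ℝ) (hr : ∀ v, r v = fderiv ℝ T v v / fderiv ℝ G v v)
    (u : W) (hu : u ≠ 0) (hGu : fderiv ℝ G u u ≠ 0)
    (lam : ℝ) (hlam : lam = r u) :
    fderiv ℝ r u u =
      fderiv ℝ (fderiv ℝ (fun x => T x - lam * G x)) u u u / fderiv ℝ G u u := by
  have hmem : ({(0 : W)}ᶜ : Set W) ∈ nhds u := isOpen_compl_singleton.mem_nhds hu
  have hT2 : DifferentiableAt ℝ (fderiv ℝ T) u :=
    ((hT.contDiffAt hmem).fderiv_right (m := 1) (by norm_num)).differentiableAt (by norm_num)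
  have hG2 : DifferentiableAt ℝ (fderiv ℝ G) u :=
    ((hG.contDiffAt hmem).fderiv_right (m := 1) (by norm_num)).differentiableAt (by norm_num)
  -- Linearity of `fderiv` holds only where `T` and `G` are differentiable, hence only near `u`.
  have hΦ : fderiv ℝ (fun x => T x - lam * G x) =ᶠ[nhds u]
      fun x => fderiv ℝ T x - lam • fderiv ℝ G x := by
    filter_upwards [isOpen_compl_singleton.mem_nhds hu] with x hx
    have hx' : ({(0 : W)}ᶜ : Set W) ∈ nhds x := isOpen_compl_singleton.mem_nhds hx
    have h1 : DifferentiableAt ℝ T x := (hT.contDiffAt hx').differentiableAt (by norm_num)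
    have h2 : DifferentiableAt ℝ G x := (hG.contDiffAt hx').differentiableAt (by norm_num)
    exact (h1.hasFDerivAt.sub (h2.hasFDerivAt.const_mul lam)).fderiv
  have hΦ2 : fderiv ℝ (fderiv ℝ (fun x => T x - lam * G x)) u =
      fderiv ℝ (fderiv ℝ T) u - lam • fderiv ℝ (fderiv ℝ G) u := by
    rw [hΦ.fderiv_eq]
    exact (hT2.hasFDerivAt.sub (hG2.hasFDerivAt.const_smul lam)).fderiv
  have hrfun : r = fun v => fderiv ℝ T v v * (fderiv ℝ G v v)⁻¹ :=
    funext fun v => by rw [hr v, div_eq_mul_inv]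
  have hinv : HasFDerivAt (fun v => (fderiv ℝ G v v)⁻¹) _ u :=
    HasDerivAt.comp_hasFDerivAt (f := fun v => fderiv ℝ G v v) u (hasDerivAt_inv hGu)
      (hasFDerivAt_fderiv_apply_self hG2)
  have hquot := ((hasFDerivAt_fderiv_apply_self hT2).fun_mul hinv).fderiv
  rw [hΦ2, hlam, hr u, hrfun, hquot]
  simp
  field_simp
  ring
end

section
/- Let Φ_λ = T − λ·G be twice continuously Fréchet differentiable on Ẇ, let u ∈ Ẇ satisfy DG(u)(u) ≠ 0, and suppose u ∈ N_λ with λ = r(u). Let h(t) := r(t·u) for t ∈ (0,∞)ⁿ and let M be the Hessian matrix at t = (1,…,1) of the function t ↦ Φ_λ(t·u). Then ∇h(1,…,1) = (M·1_n)/DG(u)(u), where 1_n = (1,…,1)ᵀ; consequently (i) if ∇h(1,…,1) = 0 then det M = 0, and (ii) if M·1_n = 0 then ∇h(1,…,1) = 0. -/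
/-!
Write `f(t) = T(t·u)` and `g(t) = G(t·u)`, so that `F = f - λ g`. Wherever all `t i ≠ 0`, the chain
rule gives `h(t) = Df(t)(t) / Dg(t)(t)`. Differentiating this quotient at `t = 1` in a direction `e`,
the relation `λ = h(1)` turns the quotient rule into
`Dh(1)(e) = (D²F(1)(e)(1) + DF(1)(e)) / Dg(1)(1)`. The Nehari constraint says exactly that
`DF(1) = 0` on the coordinate directions, and `D²F(1)(e_i)(1)` is the `i`-th row sum of the Hessian.
The quotient computation is `fderiv_rayleigh_quotient`. The claim on `det M` follows because the
all-ones vector is then a nonzero element of the kernel of `M`.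
-/

/-- The derivative of the radial derivative `y ↦ Df(y)(y)` of a `C²` function. -/
lemma hasFDerivAt_radial {E : Type*} [NormedAddCommGroup E] [NormedSpace ℝ E]
    {f : E → ℝ} {x : E} (hf : ContDiffAt ℝ 2 f x) :
    HasFDerivAt (fun y => fderiv ℝ f y y)
      ((fderiv ℝ f x).comp (ContinuousLinearMap.id ℝ E) + (fderiv ℝ (fderiv ℝ f) x).flip x) x := by
  have h1 : DifferentiableAt ℝ (fderiv ℝ f) x :=
    (hf.fderiv_right (m := 1) (by norm_num)).differentiableAt (by norm_num)
  exact h1.hasFDerivAt.clm_apply (hasFDerivAt_id x)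

/-- The derivative of the Rayleigh quotient of `f` and `g` at a point where its value is `lam`,
in terms of the first two derivatives of `f - lam * g`. -/
lemma fderiv_rayleigh_quotient {E : Type*} [NormedAddCommGroup E] [NormedSpace ℝ E]
    {f g : E → ℝ} {x : E} (hf : ContDiffAt ℝ 2 f x) (hg : ContDiffAt ℝ 2 g x)
    (hgx : fderiv ℝ g x x ≠ 0) {lam : ℝ} (hlam : lam = fderiv ℝ f x x / fderiv ℝ g x x) (e : E) :
    fderiv ℝ (fun y => fderiv ℝ f y y / fderiv ℝ g y y) x e =
      (fderiv ℝ (fderiv ℝ (fun y => f y - lam * g y)) x e x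
        + fderiv ℝ (fun y => f y - lam * g y) x e) / fderiv ℝ g x x := by
  have hF : ContDiffAt ℝ 2 (fun y => f y - lam * g y) x := hf.sub (contDiffAt_const.mul hg)
  have hC := hasFDerivAt_radial hF
  have hA := hasFDerivAt_radial hf
  have hB := hasFDerivAt_radial hg
  have hrel : (fun y => fderiv ℝ (fun y => f y - lam * g y) y y) =ᶠ[nhds x]
      fun y => fderiv ℝ f y y - lam * fderiv ℝ g y y := by
    filter_upwards [hf.eventually (by simp), hg.eventually (by simp)] with y hfy hgy
    have h1 := hfy.differentiableAt (by norm_num)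
    have h2 := hgy.differentiableAt (by norm_num)
    rw [fderiv_fun_sub h1 (h2.const_mul lam), fderiv_const_mul h2]
    simp
  have huniq := (hC.congr_of_eventuallyEq hrel.symm).unique (hA.sub (hB.const_mul lam))
  have he := congrArg (fun L : E →L[ℝ] ℝ => L e) huniq
  have hval : fderiv ℝ f x x = lam * fderiv ℝ g x x := by
    rw [hlam]; field_simp
  have hinv : HasFDerivAt (fun y => (fderiv ℝ g y y)⁻¹) _ x :=
    HasDerivAt.comp_hasFDerivAt (f := fun y => fderiv ℝ g y y) x (hasDerivAt_inv hgx) hB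
  simp only [div_eq_mul_inv]
  rw [(hA.fun_mul hinv).fderiv]
  simp at he ⊢
  rw [hval]
  field_simp
  linear_combination -he

/-- for `u ∈ N_λ` with `λ = r(u)`, the gradient at `t = (1,…,1)` of the
fibered Rayleigh quotient `h(t) = r(t·u)` equals `(M·1_n)/DG(u)(u)`, where `M` is the
Hessian at `(1,…,1)` of `t ↦ Φ_λ(t·u)`; hence `∇h(1) = 0` implies `det M = 0`, and
`M·1_n = 0` implies `∇h(1) = 0`. -/
theorem stmt6
    {n : ℕ} (hn : 1 ≤ n)
    {W : Fin n → Type*} [∀ i, NormedAddCommGroup (W i)] [∀ i, NormedSpace ℝ (W i)]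
    (T G : (∀ i, W i) → ℝ) (lam : ℝ)
    (hT : ContDiffOn ℝ 2 T {v : ∀ i, W i | ∀ i, v i ≠ 0})
    (hG : ContDiffOn ℝ 2 G {v : ∀ i, W i | ∀ i, v i ≠ 0})
    (r : (∀ i, W i) → ℝ) (hr : ∀ v, r v = fderiv ℝ T v v / fderiv ℝ G v v)
    (u : ∀ i, W i) (hu : ∀ i, u i ≠ 0)
    (hGu : fderiv ℝ G u u ≠ 0)
    (hNeh : ∀ i, fderiv ℝ (fun x => T x - lam * G x) u (Pi.single i (u i)) = 0)
    (hlam : lam = r u)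
    (h : (Fin n → ℝ) → ℝ) (hh : h = fun t => r (fun i => t i • u i))
    (F : (Fin n → ℝ) → ℝ)
    (hF : F = fun t => T (fun i => t i • u i) - lam * G (fun i => t i • u i))
    (M : Matrix (Fin n) (Fin n) ℝ)
    (hM : ∀ i j, M i j = fderiv ℝ (fderiv ℝ F) 1 (Pi.single i 1) (Pi.single j 1)) :
    (∀ i, fderiv ℝ h 1 (Pi.single i 1) = (∑ j, M i j) / fderiv ℝ G u u) ∧
    ((∀ i, fderiv ℝ h 1 (Pi.single i 1) = 0) → M.det = 0) ∧
    ((∀ i, ∑ j, M i j = 0) → ∀ i, fderiv ℝ h 1 (Pi.single i 1) = 0) := by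
  classical
  -- `L t = t·u` as a continuous linear map
  let L : (Fin n → ℝ) →L[ℝ] (∀ i, W i) :=
    ContinuousLinearMap.pi fun i => (ContinuousLinearMap.proj i).smulRight (u i)
  have hL : ∀ t, L t = fun i => t i • u i := fun t => rfl
  have hL1 : L 1 = u := by funext i; simp [hL]
  have hLe : ∀ i, L (Pi.single i 1) = Pi.single i (u i) := by
    intro i; funext j
    by_cases hij : j = i
    · subst hij; simp [hL]
    · simp [hL, hij]
  have hopen : IsOpen {v : ∀ i, W i | ∀ i, v i ≠ 0} := by
    simp only [Set.ofPred_forall]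
    exact isOpen_iInter_of_finite fun i => isOpen_ne_fun (continuous_apply i) continuous_const
  have hTu : ContDiffAt ℝ 2 T u := hT.contDiffAt (hopen.mem_nhds hu)
  have hGu2 : ContDiffAt ℝ 2 G u := hG.contDiffAt (hopen.mem_nhds hu)
  have hf : ContDiffAt ℝ 2 (fun t => T (L t)) 1 :=
    ContDiffAt.comp (1 : Fin n → ℝ) (by rwa [hL1]) L.contDiff.contDiffAt
  have hg : ContDiffAt ℝ 2 (fun t => G (L t)) 1 :=
    ContDiffAt.comp (1 : Fin n → ℝ) (by rwa [hL1]) L.contDiff.contDiffAt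
  have hchain : ∀ (S : (∀ i, W i) → ℝ) (t e : Fin n → ℝ), DifferentiableAt ℝ S (L t) →
      fderiv ℝ (fun t => S (L t)) t e = fderiv ℝ S (L t) (L e) := by
    intro S t e hS
    have := (hS.hasFDerivAt.comp t L.hasFDerivAt).fderiv
    rw [show (fun t => S (L t)) = S ∘ L from rfl, this]
    rfl
  have hTd := hTu.differentiableAt (by norm_num)
  have hGd := hGu2.differentiableAt (by norm_num)
  have hf1 : fderiv ℝ (fun t => T (L t)) 1 1 = fderiv ℝ T u u := by
    rw [hchain T 1 1 (by rwa [hL1]), hL1]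
  have hg1 : fderiv ℝ (fun t => G (L t)) 1 1 = fderiv ℝ G u u := by
    rw [hchain G 1 1 (by rwa [hL1]), hL1]
  have hheq : h =ᶠ[nhds 1] fun t =>
      fderiv ℝ (fun t => T (L t)) t t / fderiv ℝ (fun t => G (L t)) t t := by
    have hmem : ∀ᶠ t in nhds (1 : Fin n → ℝ), L t ∈ {v : ∀ i, W i | ∀ i, v i ≠ 0} :=
      L.continuous.continuousAt.eventually_mem (by rw [hL1]; exact hopen.mem_nhds hu)
    filter_upwards [hmem] with t ht
    have h1 := (hT.contDiffAt (hopen.mem_nhds ht)).differentiableAt (by norm_num)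
    have h2 := (hG.contDiffAt (hopen.mem_nhds ht)).differentiableAt (by norm_num)
    rw [hchain T t t h1, hchain G t t h2, hh]
    exact hr _
  have hFL : F = fun t => T (L t) - lam * G (L t) := hF
  have hcrit : ∀ i, fderiv ℝ F 1 (Pi.single i 1) = 0 := by
    intro i
    rw [hFL, hchain (fun x => T x - lam * G x) 1 _
      (by rw [hL1]; exact hTd.sub (hGd.const_mul lam)), hL1, hLe]
    exact hNeh i
  have hrow : ∀ i, ∑ j, M i j = fderiv ℝ (fderiv ℝ F) 1 (Pi.single i 1) 1 := by
    intro i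
    simp only [hM]
    rw [← map_sum]
    congr 1
    exact Finset.univ_sum_single (1 : Fin n → ℝ)
  have key : ∀ i, fderiv ℝ h 1 (Pi.single i 1) = (∑ j, M i j) / fderiv ℝ G u u := by
    intro i
    rw [hheq.fderiv_eq, fderiv_rayleigh_quotient hf hg (by rwa [hg1])
      (lam := lam) (by rw [hf1, hg1, hlam, hr]), ← hFL, hcrit, hrow, hg1, add_zero]
  refine ⟨key, fun h0 => ?_, fun h0 i => by rw [key, h0, zero_div]⟩
  refine Matrix.exists_mulVec_eq_zero_iff.mp ⟨1, ?_, ?_⟩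
  · intro h1
    exact one_ne_zero (congrFun h1 (⟨0, hn⟩ : Fin n))
  · funext i
    have hi := h0 i
    rw [key, div_eq_zero_iff] at hi
    simpa [Matrix.mulVec, dotProduct] using hi.resolve_right hGu
end

section
/- Assume DG(u)(u) ≠ 0 for every u ≠ 0 and that condition (S) holds. Let λ ∈ ℝ satisfy λ*_min < λ < λ*_max. Then for every u ∈ N_λ, the derivative of the map s ↦ r(su) at s = 1 is nonzero. -/
/-- under condition (S), for `λ*_min < λ < λ*_max` (extended reals),
every point of the Nehari manifold `N_λ` has nonvanishing derivative of the fibered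
Rayleigh quotient at `s = 1`. -/
theorem stmt9
    {W : Type*} [NormedAddCommGroup W] [NormedSpace ℝ W]
    (T G : W → ℝ)
    (hT : ContDiffOn ℝ 1 T {(0 : W)}ᶜ) (hG : ContDiffOn ℝ 1 G {(0 : W)}ᶜ)
    (hGne : ∀ u : W, u ≠ 0 → fderiv ℝ G u u ≠ 0)
    (r : W → ℝ) (hr : ∀ v, r v = fderiv ℝ T v v / fderiv ℝ G v v)
    (hS : ∀ u : W, u ≠ 0 → ∀ t : ℝ, 0 < t →
      deriv (fun s => r (s • u)) t = 0 →
      (∀ s : ℝ, 0 < s → r (t • u) ≤ r (s • u)) ∨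
      (∀ s : ℝ, 0 < s → r (s • u) ≤ r (t • u)))
    (lam : ℝ)
    (hmin : (⨆ u ∈ ({(0 : W)}ᶜ : Set W), ⨅ t ∈ Set.Ioi (0 : ℝ),
        (r (t • u) : EReal)) < (lam : EReal))
    (hmax : (lam : EReal) < ⨅ u ∈ ({(0 : W)}ᶜ : Set W), ⨆ t ∈ Set.Ioi (0 : ℝ),
        (r (t • u) : EReal)) :
    ∀ u : W, u ≠ 0 → fderiv ℝ (fun x => T x - lam * G x) u u = 0 →
      deriv (fun s : ℝ => r (s • u)) 1 ≠ 0 := by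
  intro u hu hN hd
  have hTd : DifferentiableAt ℝ T u :=
    (hT.differentiableOn one_ne_zero).differentiableAt (isOpen_compl_singleton.mem_nhds hu)
  have hGd : DifferentiableAt ℝ G u :=
    (hG.differentiableOn one_ne_zero).differentiableAt (isOpen_compl_singleton.mem_nhds hu)
  -- Membership in the Nehari manifold says exactly that the Rayleigh quotient equals `lam`.
  have hru : r u = lam := by
    have hD := (hTd.hasFDerivAt.sub (hGd.hasFDerivAt.const_mul lam)).fderiv
    change fderiv ℝ (fun x => T x - lam * G x) u = _ at hD
    rw [hD] at hN
    simp only [ContinuousLinearMap.sub_apply, ContinuousLinearMap.smul_apply,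
      smul_eq_mul] at hN
    rw [hr, div_eq_iff (hGne u hu)]
    linarith
  -- By (S), `lam` is the minimum or the maximum of `r` along the ray through `u`,
  -- so `lam ≤ λ*_min` or `λ*_max ≤ lam`.
  rcases hS u hu 1 one_pos hd with h | h
  · rw [one_smul, hru] at h
    refine absurd hmin (not_lt.mpr ?_)
    exact le_iSup₂_of_le u hu (le_iInf₂ fun t ht => EReal.coe_le_coe_iff.mpr (h t ht))
  · rw [one_smul, hru] at h
    refine absurd hmax (not_lt.mpr ?_)
    exact iInf₂_le_of_le u hu (iSup₂_le fun t ht => EReal.coe_le_coe_iff.mpr (h t ht))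
end

section
/- Assume Φ_λ is twice continuously Fréchet differentiable on W \ {0}, DG(u)(u) ≠ 0 for every u ≠ 0, and condition (S) holds. Let λ ∈ ℝ satisfy λ*_min < λ < λ*_max. Then every local minimizer u of Φ_λ restricted to the Nehari manifold N_λ satisfies DΦ_λ(u) = 0, i.e. u is a critical point of Φ_λ. -/
/-!
Let `Φ = T - lam * G` and `ψ v = DΦ(v)(v)`, so that away from `0` the Nehari manifold is the level
set `ψ = 0` of a `C¹` function. If `Dψ(u)(u) ≠ 0`, the Lagrange multiplier rule gives
`a • Dψ(u) + b • DΦ(u) = 0` with `(a, b) ≠ 0`; evaluating at `u` and using `DΦ(u)(u) = 0` forces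
`a = 0`, hence `DΦ(u) = 0`.

Suppose instead that `Dψ(u)(u) = 0`. Since `r - lam = ψ / DG(·)(·)`, the fibre function
`s ↦ r (s • u)` has zero derivative at `s = 1`, so condition (S) makes `lam = r u` its global
minimum or maximum, contradicting `λ*_min < lam < λ*_max`.

Nothing is assumed about continuity of `DG`, so the quotient rule is not available.
`deriv_eq_zero_of_mul_deriv` replaces it, using that a derivative which has a one-sided limit at a
point takes that limit as its value there.
-/

open Filter Topology Set

/-- Division by a possibly discontinuous derivative `dh`: if `f - c` times `dh` (up to the factor
`s`) is a function `φ` with a double zero at `1` and `dh 1 ≠ 0`, then `deriv f 1 = 0`. Otherwise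
the slopes of `φ` and `f` would force `dh s → 0` as `s → 1`, hence `dh 1 = 0`. -/
lemma deriv_eq_zero_of_mul_deriv (f φ h dh : ℝ → ℝ) (c : ℝ)
    (hh : ∀ s, 0 < s → HasDerivAt h (dh s) s) (hne : dh 1 ≠ 0)
    (hf : ∀ s, 0 < s → (f s - c) * (s * dh s) = φ s)
    (hφ1 : φ 1 = 0) (hφ : HasDerivAt φ 0 1) : deriv f 1 = 0 := by
  by_contra hd
  have hfd : HasDerivAt f (deriv f 1) 1 :=
    (differentiableAt_of_deriv_ne_zero hd).hasDerivAt
  have hf1 : f 1 = c := by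
    have := hf 1 one_pos
    rw [hφ1, one_mul] at this
    have := (mul_eq_zero.mp this).resolve_right hne
    linarith
  have hsub : 𝓝[>] (1 : ℝ) ≤ 𝓝[≠] 1 := nhdsWithin_mono _ fun x hx => ne_of_gt hx
  have h1 := (hasDerivAt_iff_tendsto_slope.mp hφ).mono_left hsub
  have h2 := (hasDerivAt_iff_tendsto_slope.mp hfd).mono_left hsub
  have h3 := h1.div h2 hd
  have hs : Tendsto (fun s : ℝ => s) (𝓝[>] 1) (𝓝 1) := tendsto_nhdsWithin_of_tendsto_nhds tendsto_id
  have h4 := h3.div hs one_ne_zero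
  have h2ne := h2.eventually_ne hd
  have h5 : Tendsto (deriv h) (𝓝[>] 1) (𝓝 0) := by
    simp only [zero_div] at h4
    refine h4.congr' ?_
    filter_upwards [h2ne, self_mem_nhdsWithin] with s hsl hs1
    have hs1lt : (1 : ℝ) < s := hs1
    have hs0 : (0 : ℝ) < s := by linarith
    have hsub0 : s - 1 ≠ 0 := by linarith
    rw [(hh s hs0).deriv]
    simp only [Pi.div_apply, slope_def_field] at hsl ⊢
    rw [hφ1, hf1, ← hf s hs0]
    rw [hf1] at hsl
    have hfc : f s - c ≠ 0 := fun h0 => hsl (by rw [h0, zero_div])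
    field_simp
    ring
  have h6 : HasDerivWithinAt h 0 (Ici 1) 1 :=
    hasDerivWithinAt_Ici_of_tendsto_deriv (s := Ioi 1)
      (fun s hs1 => (hh s (lt_trans one_pos hs1)).differentiableAt.differentiableWithinAt)
      (hh 1 one_pos).continuousAt.continuousWithinAt self_mem_nhdsWithin h5
  exact hne ((uniqueDiffOn_Ici (1 : ℝ) 1 self_mem_Ici).eq_deriv _
    (hh 1 one_pos).hasDerivWithinAt h6)

/-- under condition (S), for `λ*_min < λ < λ*_max` (extended reals),
every local minimizer of `Φ_λ` restricted to the Nehari manifold `N_λ` is a critical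
point of `Φ_λ`. -/
theorem stmt10
    {W : Type*} [NormedAddCommGroup W] [NormedSpace ℝ W] [CompleteSpace W]
    (T G : W → ℝ) (lam : ℝ)
    (hC2 : ContDiffOn ℝ 2 (fun x => T x - lam * G x) {(0 : W)}ᶜ)
    (hGne : ∀ u : W, u ≠ 0 → fderiv ℝ G u u ≠ 0)
    (r : W → ℝ) (hr : ∀ v, r v = fderiv ℝ T v v / fderiv ℝ G v v)
    (hS : ∀ u : W, u ≠ 0 → ∀ t : ℝ, 0 < t →
      deriv (fun s : ℝ => r (s • u)) t = 0 →
      (∀ s : ℝ, 0 < s → r (t • u) ≤ r (s • u)) ∨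
      (∀ s : ℝ, 0 < s → r (s • u) ≤ r (t • u)))
    (hmin : (⨆ u ∈ ({(0 : W)}ᶜ : Set W), ⨅ t ∈ Set.Ioi (0 : ℝ),
        (r (t • u) : EReal)) < (lam : EReal))
    (hmax : (lam : EReal) < ⨅ u ∈ ({(0 : W)}ᶜ : Set W), ⨆ t ∈ Set.Ioi (0 : ℝ),
        (r (t • u) : EReal))
    (N : Set W)
    (hN : N = {u : W | u ≠ 0 ∧ fderiv ℝ (fun x => T x - lam * G x) u u = 0})
    (u : W) (hu : u ∈ N)
    (hlocmin : IsLocalMinOn (fun x => T x - lam * G x) N u) :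
    fderiv ℝ (fun x => T x - lam * G x) u = 0 := by
  subst hN
  obtain ⟨hu0, huN⟩ := hu
  set Φ : W → ℝ := fun x => T x - lam * G x with hΦ
  have hopen : IsOpen ({(0 : W)}ᶜ : Set W) := isOpen_compl_singleton
  have hCat : ∀ v : W, v ≠ 0 → ContDiffAt ℝ 2 Φ v := fun v hv =>
    hC2.contDiffAt (hopen.mem_nhds hv)
  have hΦd : ∀ v : W, v ≠ 0 → DifferentiableAt ℝ Φ v := fun v hv =>
    (hCat v hv).differentiableAt (by norm_num)
  -- A nonzero value of `fderiv` already forces differentiability of `G`.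
  have hGd : ∀ v : W, v ≠ 0 → DifferentiableAt ℝ G v := fun v hv => by
    by_contra hc
    exact hGne v hv (by rw [fderiv_zero_of_not_differentiableAt hc]; rfl)
  have hTd : ∀ v : W, v ≠ 0 → fderiv ℝ T v v = fderiv ℝ Φ v v + lam * fderiv ℝ G v v := by
    intro v hv
    have hTΦ : T = fun x => Φ x + lam * G x := by
      funext x; simp [hΦ]
    have := (hΦd v hv).hasFDerivAt.add ((hGd v hv).hasFDerivAt.const_mul lam)
    have h2 : HasFDerivAt T (fderiv ℝ Φ v + lam • fderiv ℝ G v) v := by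
      rw [hTΦ]; exact this
    rw [h2.fderiv]; simp
  have hrΦ : ∀ v : W, v ≠ 0 → (r v - lam) * fderiv ℝ G v v = fderiv ℝ Φ v v := by
    intro v hv
    rw [hr, hTd v hv]
    field_simp [hGne v hv]
    ring
  have hru : r u = lam := by
    have := hrΦ u hu0
    rw [huN] at this
    have := (mul_eq_zero.mp this).resolve_right (hGne u hu0)
    linarith
  set ψ : W → ℝ := fun v => fderiv ℝ Φ v v with hψ
  have hψC : ContDiffAt ℝ 1 ψ u := by
    have h1 : ContDiffAt ℝ 1 (fderiv ℝ Φ) u := (hCat u hu0).fderiv_right (by norm_num)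
    exact h1.clm_apply contDiffAt_id
  have hψs : HasStrictFDerivAt ψ (fderiv ℝ ψ u) u := hψC.hasStrictFDerivAt (by norm_num)
  have hψu : fderiv ℝ ψ u u ≠ 0 := by
    intro h0
    have hray : ∀ s : ℝ, HasDerivAt (fun s : ℝ => s • u) u s := fun s => by
      simpa using (hasDerivAt_id s).smul_const u
    have hsu : ∀ s : ℝ, 0 < s → s • u ≠ 0 := fun s hs => smul_ne_zero hs.ne' hu0
    have hderiv : deriv (fun s : ℝ => r (s • u)) 1 = 0 := by
      refine deriv_eq_zero_of_mul_deriv _ (fun s => ψ (s • u)) (fun s => G (s • u))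
        (fun s => fderiv ℝ G (s • u) u) lam ?_ ?_ ?_ ?_ ?_
      · intro s hs
        exact (hGd _ (hsu s hs)).hasFDerivAt.comp_hasDerivAt s (hray s)
      · simpa using hGne u hu0
      · intro s hs
        have := hrΦ (s • u) (hsu s hs)
        refine Eq.trans ?_ this
        rw [(fderiv ℝ G (s • u)).map_smul, smul_eq_mul]
      · simpa [hψ] using huN
      · have h1 : HasFDerivAt ψ (fderiv ℝ ψ u) ((1 : ℝ) • u) := by
          rw [one_smul]; exact hψs.hasFDerivAt
        have := h1.comp_hasDerivAt (1 : ℝ) (hray 1)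
        rwa [h0] at this
    rcases hS u hu0 1 one_pos hderiv with hle | hge
    · refine absurd hmin (not_lt.mpr ?_)
      refine le_iSup₂_of_le u hu0 (le_iInf₂ fun t ht => ?_)
      have := hle t ht
      rw [one_smul, hru] at this
      exact_mod_cast this
    · refine absurd hmax (not_lt.mpr ?_)
      refine iInf₂_le_of_le u hu0 (iSup₂_le fun t ht => ?_)
      have := hge t ht
      rw [one_smul, hru] at this
      exact_mod_cast this
  have hloc : IsLocalMinOn Φ {x | ψ x = ψ u} u := by
    have h1 : ∀ᶠ x in 𝓝 u, x ≠ 0 := hopen.mem_nhds hu0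
    have h2 := eventually_nhdsWithin_iff.mp hlocmin
    refine eventually_nhdsWithin_iff.mpr ?_
    filter_upwards [h1, h2] with x hx0 hx hxψ
    exact hx ⟨hx0, (show ψ x = ψ u from hxψ).trans huN⟩
  have hΦs : HasStrictFDerivAt Φ (fderiv ℝ Φ u) u := (hCat u hu0).hasStrictFDerivAt (by norm_num)
  obtain ⟨a, b, hab, heq⟩ :=
    IsLocalExtrOn.exists_multipliers_of_hasStrictFDerivAt_1d (Or.inl hloc) hψs hΦs
  have ha : a = 0 := by
    have := congrArg (fun L : W →L[ℝ] ℝ => L u) heq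
    simp only [_root_.add_apply, _root_.smul_apply, huN, smul_eq_mul,
      mul_zero, add_zero, _root_.zero_apply] at this
    exact (mul_eq_zero.mp this).resolve_right hψu
  have hb : b ≠ 0 := fun hb => hab (by rw [ha, hb]; rfl)
  rw [ha, zero_smul, zero_add] at heq
  exact (smul_eq_zero.mp heq).resolve_left hb
end

section
/- Assume Φ_λ is twice continuously Fréchet differentiable on W \ {0}, DG(u)(u) ≠ 0 for every u ≠ 0, and condition (S) holds. Let λ ∈ ℝ satisfy λ*_min < λ < λ*_max. Then for every u ∈ N_λ, the Fréchet derivative at u of the constraint functional c(v) := DΦ_λ(v)(v) is a nonzero continuous linear functional on W (hence surjective onto ℝ); consequently N_λ is a C¹ submanifold of W of codimension one. -/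
/-!
Write `g v = DG(v)(v)`. Since `g` does not vanish off the origin, `G` (hence also `T`) is
differentiable there, and `c v = g v * (r v - lam)`. Suppose `u ≠ 0`, `c u = 0` and `Dc(u) = 0`.
Then `r u = lam`, and the derivative of `s ↦ c (s • u)` at `1` is zero. Condition (S) then makes
`lam` the global minimum or maximum of `r` along the ray through `u`, provided the derivative of
`s ↦ r (s • u)` at `1` is zero; this contradicts `λ*_min < lam < λ*_max`.

Only `T - lam * G` is assumed `C²`, so `g` need not be continuous along the ray and the quotient rule
is not available. Instead, if `s ↦ r (s • u)` had a nonzero derivative at `1`, comparing slopes in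
`c = g * (r - lam)` would give `g (s • u) → 0` as `s → 1`. But `g (s • u) / s` is the derivative of
`s ↦ G (s • u)`, and a derivative with a one-sided limit attains that limit, forcing `g u = 0`
(`tendsto_zero_of_slopes` and `eq_zero_of_tendsto_radial`).
-/

open Filter Topology Set

/-- If `φ = γ * h` near `1` with `φ 1 = h 1 = 0`, `φ' 1 = 0` and `h' 1 ≠ 0`, then `γ → 0` at `1`;
no continuity of `γ` is assumed. -/
lemma tendsto_zero_of_slopes {φ γ h : ℝ → ℝ} {a : ℝ} (ha : a ≠ 0)
    (hφ : HasDerivAt φ 0 1) (hh : HasDerivAt h a 1) (hφ1 : φ 1 = 0) (hh1 : h 1 = 0)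
    (heq : ∀ s, 0 < s → φ s = γ s * h s) : Tendsto γ (𝓝[>] 1) (𝓝 0) := by
  have h1 := hasDerivAt_iff_tendsto_slope.1 hφ
  have h2 := hasDerivAt_iff_tendsto_slope.1 hh
  have h3 : Tendsto (fun s => slope φ 1 s / slope h 1 s) (𝓝[≠] 1) (𝓝 0) := by
    rw [← zero_div a]
    exact h1.div h2 ha
  have h4 : 𝓝[>] (1 : ℝ) ≤ 𝓝[≠] 1 := nhdsWithin_mono _ fun s hs => ne_of_gt hs
  refine (h3.mono_left h4).congr' ?_
  filter_upwards [h4 (h2.eventually_ne ha), self_mem_nhdsWithin] with s hs hs1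
  have hs1' : (1 : ℝ) < s := hs1
  rw [div_eq_iff hs]
  simp only [slope_def_field, hφ1, hh1, heq s (by linarith)]
  ring

/-- The radial derivative `DG(s • u)(s • u)` cannot tend to `0` as `s ↓ 1` unless it vanishes at
`s = 1`. -/
lemma eq_zero_of_tendsto_radial {W : Type*} [NormedAddCommGroup W] [NormedSpace ℝ W]
    {G : W → ℝ} {u : W} (hG : ∀ s : ℝ, 0 < s → DifferentiableAt ℝ G (s • u))
    (hlim : Tendsto (fun s : ℝ => fderiv ℝ G (s • u) (s • u)) (𝓝[>] 1) (𝓝 0)) :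
    fderiv ℝ G u u = 0 := by
  have hd : ∀ s : ℝ, 0 < s → HasDerivAt (fun s : ℝ => G (s • u)) (fderiv ℝ G (s • u) u) s := by
    intro s hs
    have h1 : HasDerivAt (fun s : ℝ => s • u) u s := by
      simpa using (hasDerivAt_id s).smul_const u
    exact (hG s hs).hasFDerivAt.comp_hasDerivAt s h1
  have hlim' : Tendsto (deriv fun s : ℝ => G (s • u)) (𝓝[>] 1) (𝓝 0) := by
    have hid : Tendsto (fun s : ℝ => s) (𝓝[>] 1) (𝓝 1) := tendsto_id.mono_left nhdsWithin_le_nhds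
    have h2 : Tendsto (fun s : ℝ => fderiv ℝ G (s • u) (s • u) / s) (𝓝[>] 1) (𝓝 0) := by
      rw [← zero_div (1 : ℝ)]
      exact hlim.div hid one_ne_zero
    refine h2.congr' ?_
    filter_upwards [self_mem_nhdsWithin] with s hs
    have hs0 : (0 : ℝ) < s := lt_trans one_pos hs
    rw [(hd s hs0).deriv, map_smul, smul_eq_mul, mul_div_cancel_left₀ _ hs0.ne']
  have h3 : HasDerivWithinAt (fun s : ℝ => G (s • u)) 0 (Ici 1) 1 :=
    hasDerivWithinAt_Ici_of_tendsto_deriv (s := Ioi 1)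
      (fun s hs => (hd s (lt_trans one_pos hs)).differentiableAt.differentiableWithinAt)
      (hd 1 one_pos).continuousAt.continuousWithinAt self_mem_nhdsWithin hlim'
  have h4 := (hd 1 one_pos).hasDerivWithinAt (s := Ici 1)
  have h5 := (uniqueDiffOn_Ici (1 : ℝ) 1 self_mem_Ici).eq_deriv _ h4 h3
  simpa using h5


/-- under condition (S), for `λ*_min < λ < λ*_max` (extended reals),
at every point `u` of the Nehari manifold `N_λ` the Fréchet derivative of the
constraint functional `c(v) := DΦ_λ(v)(v)` is a nonzero (hence surjective onto `ℝ`)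
continuous linear functional, so `N_λ` is a `C¹` submanifold of codimension one. -/
theorem stmt13
    {W : Type*} [NormedAddCommGroup W] [NormedSpace ℝ W] [CompleteSpace W]
    (T G : W → ℝ) (lam : ℝ)
    (hC2 : ContDiffOn ℝ 2 (fun x => T x - lam * G x) {(0 : W)}ᶜ)
    (hGne : ∀ u : W, u ≠ 0 → fderiv ℝ G u u ≠ 0)
    (r : W → ℝ) (hr : ∀ v, r v = fderiv ℝ T v v / fderiv ℝ G v v)
    (hS : ∀ u : W, u ≠ 0 → ∀ t : ℝ, 0 < t →
      deriv (fun s : ℝ => r (s • u)) t = 0 →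
      (∀ s : ℝ, 0 < s → r (t • u) ≤ r (s • u)) ∨
      (∀ s : ℝ, 0 < s → r (s • u) ≤ r (t • u)))
    (hmin : (⨆ u ∈ ({(0 : W)}ᶜ : Set W), ⨅ t ∈ Set.Ioi (0 : ℝ),
        (r (t • u) : EReal)) < (lam : EReal))
    (hmax : (lam : EReal) < ⨅ u ∈ ({(0 : W)}ᶜ : Set W), ⨆ t ∈ Set.Ioi (0 : ℝ),
        (r (t • u) : EReal))
    (c : W → ℝ) (hc : c = fun v => fderiv ℝ (fun x => T x - lam * G x) v v) :
    ∀ u : W, u ≠ 0 → c u = 0 →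
      fderiv ℝ c u ≠ 0 ∧ Function.Surjective (fderiv ℝ c u) := by
  intro u hu hcu
  have hGd : ∀ v : W, v ≠ 0 → DifferentiableAt ℝ G v := by
    intro v hv
    by_contra h
    exact hGne v hv (by rw [fderiv_zero_of_not_differentiableAt h]; rfl)
  have hΦ : ∀ v : W, v ≠ 0 → ContDiffAt ℝ 2 (fun x => T x - lam * G x) v := fun v hv =>
    hC2.contDiffAt (isOpen_compl_singleton.mem_nhds hv)
  have hTd : ∀ v : W, v ≠ 0 → DifferentiableAt ℝ T v := by
    intro v hv
    have h := ((hΦ v hv).differentiableAt (by norm_num)).add ((hGd v hv).const_mul lam)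
    exact h.congr_of_eventuallyEq (.of_forall fun x => by simp)
  have hcr : ∀ v : W, v ≠ 0 → c v = fderiv ℝ G v v * (r v - lam) := by
    intro v hv
    have h : fderiv ℝ (fun x => T x - lam * G x) v = fderiv ℝ T v - lam • fderiv ℝ G v :=
      ((hTd v hv).hasFDerivAt.sub ((hGd v hv).hasFDerivAt.const_mul lam)).fderiv
    have hg := hGne v hv
    simp only [hc, h, hr, sub_apply, smul_apply, smul_eq_mul]
    field_simp
  have hcd : DifferentiableAt ℝ c u := by
    have h1 : ContDiffAt ℝ 1 (fderiv ℝ (fun x => T x - lam * G x)) u :=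
      (hΦ u hu).fderiv_right (by norm_num)
    rw [hc]
    exact (h1.differentiableAt (by norm_num)).clm_apply differentiableAt_id
  have hru : r u = lam := by
    have h := hcr u hu
    rw [hcu, zero_eq_mul] at h
    exact sub_eq_zero.1 (h.resolve_left (hGne u hu))
  have hsu : ∀ s : ℝ, 0 < s → s • u ≠ 0 := fun s hs => smul_ne_zero hs.ne' hu
  have hne : fderiv ℝ c u ≠ 0 := by
    intro h0
    have hφ : HasDerivAt (fun s : ℝ => c (s • u)) 0 1 := by
      have h1 : HasDerivAt (fun s : ℝ => s • u) u 1 := by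
        simpa using (hasDerivAt_id (1 : ℝ)).smul_const u
      have h2 : HasFDerivAt c (0 : W →L[ℝ] ℝ) ((1 : ℝ) • u) := by
        rw [one_smul, ← h0]
        exact hcd.hasFDerivAt
      exact h2.comp_hasDerivAt (1 : ℝ) h1
    have hderiv : deriv (fun s : ℝ => r (s • u)) 1 = 0 := by
      by_contra ha
      have hrd := (differentiableAt_of_deriv_ne_zero ha).hasDerivAt.sub_const lam
      have hlim := tendsto_zero_of_slopes (γ := fun s : ℝ => fderiv ℝ G (s • u) (s • u)) ha hφ hrd
        (by simpa using hcu) (by simp [hru]) (fun s hs => hcr _ (hsu s hs))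
      exact hGne u hu (eq_zero_of_tendsto_radial (fun s hs => hGd _ (hsu s hs)) hlim)
    rcases hS u hu 1 one_pos hderiv with h | h
    · refine absurd hmin (not_lt.2 (le_trans ?_ (le_iSup₂ (α := EReal) u hu)))
      refine le_iInf₂ fun t ht => ?_
      have := h t ht
      rw [one_smul, hru] at this
      exact_mod_cast this
    · refine absurd hmax (not_lt.2 (le_trans (iInf₂_le (α := EReal) u hu) ?_))
      refine iSup₂_le fun t ht => ?_
      have := h t ht
      rw [one_smul, hru] at this
      exact_mod_cast this
  refine ⟨hne, ?_⟩
  have h := LinearMap.surjective (f := (fderiv ℝ c u : W →ₗ[ℝ] ℝ))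
    (fun h => hne (ContinuousLinearMap.coe_injective h))
  exact h
end

section
/- Let p, q > 1 and α, β > 0 be real numbers with α/p + β/q > 1, let A₁, A₂, B₁, B₂ > 0 and F ∈ ℝ. Define R(t,s) := (t^p·A₁ + s^q·A₂ − t^α·s^β·(α+β)·F)/(t^p·B₁ + s^q·B₂) for t, s > 0. Then: (i) if F < 0, R is unbounded above on (0,∞)²; (ii) if F ≥ 0, then sup_{t,s>0} R(t,s) = max(A₁/B₁, A₂/B₂). -/
/-!
The quotient is evaluated along the curves `t = x^(a/p)`, `s = x^(b/q)`, on which the three terms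
become powers of `x`, with exponents `a`, `b` and `aα/p + bβ/q`.

For `F < 0` take `a = b = 1`: after cancelling `x` the coupling term is a positive multiple of
`x^(α/p + β/q - 1)`, which tends to infinity as `x → ∞`.

For `F ≥ 0` the coupling term only lowers the quotient, and what remains is a weighted mediant
of `A₁/B₁` and `A₂/B₂`; this is the upper bound. Conversely, with `a = 1`, `b = 2` and `x → 0⁺`, the
term `t^p` dominates both `s^q` and the coupling term by superhomogeneity, so the quotient tends to
`A₁/B₁` (`fst_le_of_bound`); the value `A₂/B₂` is approached symmetrically.
-/

open Filter Topology

/-- Any upper bound of the quotient is at least `A₁/B₁`, whatever the sign of the coupling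
constant `G`. -/
lemma fst_le_of_bound {p q α β : ℝ} (hp : 1 < p) (hq : 1 < q) (hβ : 0 < β)
    (hd : 1 < α / p + β / q) {A₁ A₂ B₁ B₂ G M : ℝ} (hB₁ : 0 < B₁)
    (h : ∀ t s : ℝ, 0 < t → 0 < s →
      (t ^ p * A₁ + s ^ q * A₂ - t ^ α * s ^ β * G) / (t ^ p * B₁ + s ^ q * B₂) ≤ M) :
    A₁ / B₁ ≤ M := by
  have hp0 : p ≠ 0 := by linarith
  have hq0 : q ≠ 0 := by linarith
  have hc : 0 < α / p + 2 * (β / q) - 1 := by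
    have : 0 < β / q := div_pos hβ (by linarith)
    linarith
  set c := α / p + 2 * (β / q) - 1 with hcdef
  have hx : Tendsto (fun x : ℝ => x) (𝓝[>] 0) (𝓝 0) := tendsto_nhdsWithin_of_tendsto_nhds tendsto_id
  have hxc : Tendsto (fun x : ℝ => x ^ c) (𝓝[>] 0) (𝓝 0) := by
    have := (Real.continuousAt_rpow_const 0 c (Or.inr hc.le)).tendsto
    rw [Real.zero_rpow hc.ne'] at this
    exact this.comp hx
  have hlim : Tendsto (fun x : ℝ => (A₁ + x * A₂ - x ^ c * G) / (B₁ + x * B₂)) (𝓝[>] 0)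
      (𝓝 ((A₁ + 0 * A₂ - 0 * G) / (B₁ + 0 * B₂))) :=
    (((hx.mul_const A₂).const_add A₁).sub (hxc.mul_const G)).div
      ((hx.mul_const B₂).const_add B₁) (by simpa using hB₁.ne')
  simp only [zero_mul, add_zero, sub_zero] at hlim
  refine le_of_tendsto hlim ?_
  filter_upwards [self_mem_nhdsWithin] with x hx0
  have hx0 : 0 < x := hx0
  have := h (x ^ (1 / p)) (x ^ (2 / q)) (Real.rpow_pos_of_pos hx0 _) (Real.rpow_pos_of_pos hx0 _)
  have e1 : (x ^ (1 / p)) ^ p = x := by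
    rw [← Real.rpow_mul hx0.le, div_mul_cancel₀ _ hp0, Real.rpow_one]
  have e2 : (x ^ (2 / q)) ^ q = x * x := by
    rw [← Real.rpow_mul hx0.le, div_mul_cancel₀ _ hq0, Real.rpow_two, sq]
  have e3 : (x ^ (1 / p)) ^ α * (x ^ (2 / q)) ^ β = x * x ^ c := by
    rw [← Real.rpow_mul hx0.le, ← Real.rpow_mul hx0.le, ← Real.rpow_add hx0,
      ← Real.rpow_one_add' hx0.le (by positivity)]
    congr 1
    rw [hcdef]
    ring
  rw [e1, e2, e3] at this
  rwa [show x * A₁ + x * x * A₂ - x * x ^ c * G = x * (A₁ + x * A₂ - x ^ c * G) by ring,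
    show x * B₁ + x * x * B₂ = x * (B₁ + x * B₂) by ring,
    mul_div_mul_left _ _ hx0.ne'] at this

/-- for `R(t,s) = (t^p A₁ + s^q A₂ − t^α s^β (α+β)F)/(t^p B₁ + s^q B₂)`
with `α/p + β/q > 1`: if `F < 0` then `R` is unbounded above on `(0,∞)²`, and if
`F ≥ 0` then `sup_{t,s>0} R(t,s) = max(A₁/B₁, A₂/B₂)`. -/
theorem stmt16 (p q α β : ℝ) (hp : 1 < p) (hq : 1 < q) (hα : 0 < α) (hβ : 0 < β)
    (hd : 1 < α / p + β / q)
    (A₁ A₂ B₁ B₂ : ℝ) (hA₁ : 0 < A₁) (hA₂ : 0 < A₂) (hB₁ : 0 < B₁) (hB₂ : 0 < B₂)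
    (F : ℝ)
    (R : ℝ → ℝ → ℝ)
    (hR : ∀ t s : ℝ, R t s =
      (t ^ p * A₁ + s ^ q * A₂ - t ^ α * s ^ β * (α + β) * F) /
        (t ^ p * B₁ + s ^ q * B₂)) :
    (F < 0 → ¬ BddAbove (Set.image2 R (Set.Ioi (0 : ℝ)) (Set.Ioi (0 : ℝ)))) ∧
    (0 ≤ F → sSup (Set.image2 R (Set.Ioi (0 : ℝ)) (Set.Ioi (0 : ℝ))) =
      max (A₁ / B₁) (A₂ / B₂)) := by
  have hp0 : p ≠ 0 := by linarith
  have hq0 : q ≠ 0 := by linarith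
  constructor
  · rintro hF ⟨M, hM⟩
    have hc : 0 < α / p + β / q - 1 := by linarith
    have hG : 0 < (α + β) * (-F) := mul_pos (by linarith) (by linarith)
    have hlim : Tendsto (fun x : ℝ =>
        (A₁ + A₂ + x ^ (α / p + β / q - 1) * ((α + β) * (-F))) / (B₁ + B₂)) atTop atTop :=
      (tendsto_atTop_add_const_left _ _
        ((tendsto_rpow_atTop hc).atTop_mul_const hG)).atTop_div_const (by positivity)
    obtain ⟨x, hxM, hx0⟩ := ((hlim.eventually_gt_atTop M).and (eventually_gt_atTop 0)).exists
    have := hM (Set.mem_image2_of_mem (Set.mem_Ioi.2 (Real.rpow_pos_of_pos hx0 (1 / p)))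
      (Set.mem_Ioi.2 (Real.rpow_pos_of_pos hx0 (1 / q))))
    have e1 : (x ^ (1 / p)) ^ p = x := by
      rw [← Real.rpow_mul hx0.le, div_mul_cancel₀ _ hp0, Real.rpow_one]
    have e2 : (x ^ (1 / q)) ^ q = x := by
      rw [← Real.rpow_mul hx0.le, div_mul_cancel₀ _ hq0, Real.rpow_one]
    have e3 : (x ^ (1 / p)) ^ α * (x ^ (1 / q)) ^ β = x * x ^ (α / p + β / q - 1) := by
      rw [← Real.rpow_mul hx0.le, ← Real.rpow_mul hx0.le, ← Real.rpow_add hx0,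
        ← Real.rpow_one_add' hx0.le (by positivity)]
      congr 1
      ring
    rw [hR, e1, e2, e3,
      show x * A₁ + x * A₂ - x * x ^ (α / p + β / q - 1) * (α + β) * F
        = x * (A₁ + A₂ + x ^ (α / p + β / q - 1) * ((α + β) * (-F))) by ring,
      ← mul_add, mul_div_mul_left _ _ hx0.ne'] at this
    linarith
  · intro hF
    refine IsLUB.csSup_eq ⟨?_, ?_⟩
      ((Set.nonempty_Ioi (a := (0 : ℝ))).image2 (Set.nonempty_Ioi (a := (0 : ℝ))))
    · rintro _ ⟨t, ht, s, hs, rfl⟩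
      have ht : 0 < t := ht
      have hs : 0 < s := hs
      have h1 : A₁ ≤ max (A₁ / B₁) (A₂ / B₂) * B₁ := (div_le_iff₀ hB₁).1 (le_max_left _ _)
      have h2 : A₂ ≤ max (A₁ / B₁) (A₂ / B₂) * B₂ := (div_le_iff₀ hB₂).1 (le_max_right _ _)
      have hG : 0 ≤ t ^ α * s ^ β * (α + β) * F := by positivity
      have hm1 := mul_le_mul_of_nonneg_left h1 (Real.rpow_pos_of_pos ht p).le
      have hm2 := mul_le_mul_of_nonneg_left h2 (Real.rpow_pos_of_pos hs q).le
      rw [hR, div_le_iff₀ (by positivity)]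
      linarith
    · intro M hM
      have hb : ∀ t s : ℝ, 0 < t → 0 < s → R t s ≤ M := fun t s ht hs =>
        hM (Set.mem_image2_of_mem ht hs)
      refine max_le ?_ ?_
      · refine fst_le_of_bound (A₂ := A₂) (B₂ := B₂) (G := (α + β) * F) hp hq hβ hd hB₁ ?_
        intro t s ht hs
        have := hb t s ht hs
        rwa [hR, mul_assoc _ (α + β) F] at this
      · refine fst_le_of_bound (A₂ := A₁) (B₂ := B₁) (G := (α + β) * F) hq hp hα
          (by linarith : 1 < β / q + α / p) hB₂ ?_
        intro t s ht hs
        have := hb s t hs ht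
        rwa [hR, mul_assoc _ (α + β) F, add_comm (s ^ p * A₁), add_comm (s ^ p * B₁),
          mul_comm (s ^ α)] at this
end

section
/- Let p, q > 1 and α, β > 0 be real numbers with d := α/p + β/q − 1 > 0, and let P, Q, F be nonzero reals. Consider the system t^{p−1}·P = α·t^{α−1}·s^β·F and s^{q−1}·Q = β·t^α·s^{β−1}·F in the unknowns t, s > 0. This system has a solution with t > 0 and s > 0 if and only if P, Q, F are either all positive or all negative; in that case the solution is unique and is given by t^{pqd} = (α^{β−q}/β^β)·|P|^{q−β}·|Q|^β/|F|^q and s^{pqd} = (β^{α−p}/α^α)·|P|^α·|Q|^{p−α}/|F|^p. -/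
/-!
Taking logarithms turns the system into a linear one in `x = log t`, `y = log s`,

  `(p - α) x - β y = log α + log |F| - log |P|`,
  `(q - β) y - α x = log β + log |F| - log |Q|`,

with determinant `(p - α)(q - β) - αβ = -pqd ≠ 0` (`log_equation` gives each equation,
`linear_solution` is Cramer's rule). Existence, uniqueness and the explicit formulas are those of
this linear system. The common sign of `P, Q, F` is forced because in each equation the
coefficients of `P` (or `Q`) and of `F` are positive; conversely, when the three signs agree the
system is unchanged on passing to absolute values.
-/

/-- One equation of the fibering system, with positive data, is a linear equation in `log t`,
`log s`. Both equations are instances, the second one with the roles of `t` and `s` swapped. -/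
lemma log_equation {p a b t s P F : ℝ} (ha : 0 < a) (ht : 0 < t) (hs : 0 < s)
    (hP : 0 < P) (hF : 0 < F) :
    t ^ (p - 1) * P = a * t ^ (a - 1) * s ^ b * F ↔
      (p - a) * Real.log t - b * Real.log s = Real.log a + Real.log F - Real.log P := by
  have hl : 0 < t ^ (p - 1) * P := by positivity
  have hr : 0 < a * t ^ (a - 1) * s ^ b * F := by positivity
  rw [← Real.log_injOn_pos.eq_iff (Set.mem_Ioi.2 hl) (Set.mem_Ioi.2 hr),
    Real.log_mul (by positivity) (by positivity), Real.log_mul (by positivity) (by positivity),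
    Real.log_mul (by positivity) (by positivity), Real.log_mul (by positivity) (by positivity),
    Real.log_rpow ht, Real.log_rpow ht, Real.log_rpow hs]
  constructor <;> intro h <;> linarith

/-- Cramer's rule for the linearised system; `D` is minus its determinant. -/
lemma linear_solution {p q α β A B x y D : ℝ} (hD : D = α * q + β * p - p * q) (hD0 : D ≠ 0) :
    ((p - α) * x - β * y = A ∧ (q - β) * y - α * x = B) ↔
      (D * x = (β - q) * A - β * B ∧ D * y = (α - p) * B - α * A) := by
  constructor
  · rintro ⟨rfl, rfl⟩
    subst hD
    constructor <;> ring
  · rintro ⟨hx, hy⟩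
    constructor <;> apply mul_left_cancel₀ hD0
    · linear_combination (p - α) * hx - β * hy - A * hD
    · linear_combination (q - β) * hy - α * hx - B * hD

lemma pos_iff_of_mul_eq {c k P F : ℝ} (hc : 0 < c) (hk : 0 < k) (h : c * P = k * F) :
    0 < P ↔ 0 < F := by
  rw [← mul_pos_iff_of_pos_left hc, h, mul_pos_iff_of_pos_left hk]

lemma abs_of_mul_eq {c k P F : ℝ} (hc : 0 < c) (hk : 0 < k) (h : c * P = k * F) :
    c * |P| = k * |F| := by
  rw [← abs_of_pos hc, ← abs_of_pos hk, ← abs_mul, ← abs_mul, h]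

/-- Exponentiated form of the Cramer formulas; both `t ^ (p * q * d)` and `s ^ (p * q * d)` are
instances. -/
lemma rpow_eq_of_log {t D a b P Q F e₁ e₂ e₃ e₄ e₅ : ℝ} (ht : 0 < t) (ha : 0 < a) (hb : 0 < b)
    (hP : 0 < P) (hQ : 0 < Q) (hF : 0 < F)
    (h : D * Real.log t = e₁ * Real.log a - e₂ * Real.log b + e₃ * Real.log P
      + e₄ * Real.log Q - e₅ * Real.log F) :
    t ^ D = (a ^ e₁ / b ^ e₂) * P ^ e₃ * Q ^ e₄ / F ^ e₅ := by
  apply Real.log_injOn_pos (Set.mem_Ioi.2 (by positivity)) (Set.mem_Ioi.2 (by positivity))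
  rw [Real.log_div (by positivity) (by positivity), Real.log_mul (by positivity) (by positivity),
    Real.log_mul (by positivity) (by positivity), Real.log_div (by positivity) (by positivity),
    Real.log_rpow ht, Real.log_rpow ha, Real.log_rpow hb, Real.log_rpow hP, Real.log_rpow hQ,
    Real.log_rpow hF, h]

/-- the fibering system `t^{p−1}P = α t^{α−1} s^β F`,
`s^{q−1}Q = β t^α s^{β−1} F` has a positive solution `(t,s)` iff `P, Q, F` are all
positive or all negative; in that case the solution is unique and given by the
stated explicit formulas for `t^{pqd}` and `s^{pqd}`. -/
theorem stmt17 (p q α β : ℝ) (hp : 1 < p) (hq : 1 < q) (hα : 0 < α) (hβ : 0 < β)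
    (d : ℝ) (hd : d = α / p + β / q - 1) (hdpos : 0 < d)
    (P Q F : ℝ) (hP : P ≠ 0) (hQ : Q ≠ 0) (hF : F ≠ 0) :
    ((∃ t s : ℝ, 0 < t ∧ 0 < s ∧
        t ^ (p - 1) * P = α * t ^ (α - 1) * s ^ β * F ∧
        s ^ (q - 1) * Q = β * t ^ α * s ^ (β - 1) * F) ↔
      ((0 < P ∧ 0 < Q ∧ 0 < F) ∨ (P < 0 ∧ Q < 0 ∧ F < 0))) ∧
    (∀ t s : ℝ, 0 < t → 0 < s →
      t ^ (p - 1) * P = α * t ^ (α - 1) * s ^ β * F →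
      s ^ (q - 1) * Q = β * t ^ α * s ^ (β - 1) * F →
      t ^ (p * q * d) = (α ^ (β - q) / β ^ β) * |P| ^ (q - β) * |Q| ^ β / |F| ^ q ∧
      s ^ (p * q * d) = (β ^ (α - p) / α ^ α) * |P| ^ α * |Q| ^ (p - α) / |F| ^ p) ∧
    (∀ t s t' s' : ℝ, 0 < t → 0 < s → 0 < t' → 0 < s' →
      t ^ (p - 1) * P = α * t ^ (α - 1) * s ^ β * F →
      s ^ (q - 1) * Q = β * t ^ α * s ^ (β - 1) * F →
      t' ^ (p - 1) * P = α * t' ^ (α - 1) * s' ^ β * F →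
      s' ^ (q - 1) * Q = β * t' ^ α * s' ^ (β - 1) * F →
      t = t' ∧ s = s') := by
  have hD : p * q * d = α * q + β * p - p * q := by
    rw [hd]; field_simp
  have hDpos : 0 < p * q * d := by positivity
  have hP' := abs_pos.2 hP
  have hQ' := abs_pos.2 hQ
  have hF' := abs_pos.2 hF
  set A := Real.log α + Real.log |F| - Real.log |P| with hA
  set B := Real.log β + Real.log |F| - Real.log |Q| with hB
  -- A solution for `P, Q, F` is one for the absolute values, hence solves the linear system.
  have key : ∀ t s : ℝ, 0 < t → 0 < s →
      t ^ (p - 1) * P = α * t ^ (α - 1) * s ^ β * F →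
      s ^ (q - 1) * Q = β * t ^ α * s ^ (β - 1) * F →
      p * q * d * Real.log t = (β - q) * A - β * B ∧
      p * q * d * Real.log s = (α - p) * B - α * A := by
    intro t s ht hs h1 h2
    rw [mul_right_comm β] at h2
    exact (linear_solution hD hDpos.ne').1
      ⟨(log_equation hα ht hs hP' hF').1 (abs_of_mul_eq (by positivity) (by positivity) h1),
        (log_equation hβ hs ht hQ' hF').1 (abs_of_mul_eq (by positivity) (by positivity) h2)⟩
  refine ⟨⟨?_, ?_⟩, ?_, ?_⟩
  · rintro ⟨t, s, ht, hs, h1, h2⟩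
    have e1 := pos_iff_of_mul_eq (by positivity) (by positivity) h1
    have e2 := pos_iff_of_mul_eq (by positivity) (by positivity) h2
    rcases hF.lt_or_gt with hn | hpos
    · have hn' := not_lt.2 hn.le
      exact Or.inr ⟨lt_of_le_of_ne (not_lt.1 (mt e1.1 hn')) hP,
        lt_of_le_of_ne (not_lt.1 (mt e2.1 hn')) hQ, hn⟩
    · exact Or.inl ⟨e1.2 hpos, e2.2 hpos, hpos⟩
  · intro hsign
    obtain ⟨hx, hy⟩ := (linear_solution (x := ((β - q) * A - β * B) / (p * q * d))
      (y := ((α - p) * B - α * A) / (p * q * d)) hD hDpos.ne').2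
      ⟨mul_div_cancel₀ _ hDpos.ne', mul_div_cancel₀ _ hDpos.ne'⟩
    rw [← Real.log_exp (((β - q) * A - β * B) / (p * q * d)),
      ← Real.log_exp (((α - p) * B - α * A) / (p * q * d))] at hx hy
    have h1 := (log_equation hα (Real.exp_pos _) (Real.exp_pos _) hP' hF').2 hx
    have h2 := (log_equation hβ (Real.exp_pos _) (Real.exp_pos _) hQ' hF').2 hy
    rw [mul_right_comm β] at h2
    refine ⟨Real.exp (((β - q) * A - β * B) / (p * q * d)),
      Real.exp (((α - p) * B - α * A) / (p * q * d)), Real.exp_pos _, Real.exp_pos _, ?_, ?_⟩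
    all_goals rcases hsign with ⟨h3, h4, h5⟩ | ⟨h3, h4, h5⟩
    · rwa [abs_of_pos h3, abs_of_pos h5] at h1
    · rw [abs_of_neg h3, abs_of_neg h5] at h1
      linarith
    · rwa [abs_of_pos h4, abs_of_pos h5] at h2
    · rw [abs_of_neg h4, abs_of_neg h5] at h2
      linarith
  · intro t s ht hs h1 h2
    obtain ⟨hx, hy⟩ := key t s ht hs h1 h2
    constructor
    · apply rpow_eq_of_log ht hα hβ hP' hQ' hF'
      rw [hx, hA, hB]; ring
    · apply rpow_eq_of_log hs hβ hα hP' hQ' hF'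
      rw [hy, hA, hB]; ring
  · intro t s t' s' ht hs ht' hs' h1 h2 h1' h2'
    obtain ⟨hx, hy⟩ := key t s ht hs h1 h2
    obtain ⟨hx', hy'⟩ := key t' s' ht' hs' h1' h2'
    exact ⟨Real.log_injOn_pos ht ht' (mul_left_cancel₀ hDpos.ne' (hx.trans hx'.symm)),
      Real.log_injOn_pos hs hs' (mul_left_cancel₀ hDpos.ne' (hy.trans hy'.symm))⟩
end

section
/- Suppose T and G are continuously Fréchet differentiable on W \ {0}, Φ_λ is continuous on W with Φ_λ(0) = 0, and DG(v)(v) > 0 for every v ≠ 0. Let u ≠ 0 satisfy r(u) = λ and r(tu) < λ for every t ∈ (0,1). Then Φ_λ(u) < 0. -/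
/-!
By the mean value theorem on `[0, 1]`, `Φ_λ(u) = Φ_λ(u) - Φ_λ(0)` equals the derivative of
`t ↦ Φ_λ(t u)` at some `c ∈ (0, 1)`. Multiplied by `c`, this derivative is
`DG(cu)(cu) * (r(cu) - λ) < 0`. Continuity at `0` is all that is needed at the left endpoint.
-/

/-- if `DG(v)(v) > 0` for all `v ≠ 0`, `Φ_λ` is continuous with
`Φ_λ(0) = 0`, and `u ≠ 0` satisfies `r(u) = λ` with `r(tu) < λ` for `t ∈ (0,1)`,
then `Φ_λ(u) < 0`. -/
theorem stmt18
    {W : Type*} [NormedAddCommGroup W] [NormedSpace ℝ W]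
    (T G : W → ℝ) (lam : ℝ)
    (hT : ContDiffOn ℝ 1 T {(0 : W)}ᶜ) (hG : ContDiffOn ℝ 1 G {(0 : W)}ᶜ)
    (hcont : Continuous (fun x => T x - lam * G x))
    (h0 : T 0 - lam * G 0 = 0)
    (hGpos : ∀ v : W, v ≠ 0 → 0 < fderiv ℝ G v v)
    (r : W → ℝ) (hr : ∀ v, r v = fderiv ℝ T v v / fderiv ℝ G v v)
    (u : W) (hu : u ≠ 0) (hru : r u = lam)
    (hlt : ∀ t : ℝ, 0 < t → t < 1 → r (t • u) < lam) :
    T u - lam * G u < 0 := by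
  have hdiff : ∀ F : W → ℝ, ContDiffOn ℝ 1 F {(0 : W)}ᶜ → ∀ v : W, v ≠ 0 →
      DifferentiableAt ℝ F v := fun F hF v hv =>
    (hF.contDiffAt (isOpen_compl_singleton.mem_nhds hv)).differentiableAt one_ne_zero
  obtain ⟨c, ⟨hc0, hc1⟩, hc⟩ := exists_hasDerivAt_eq_slope
    (fun t : ℝ => T (t • u) - lam * G (t • u))
    (fun t => fderiv ℝ T (t • u) u - lam * fderiv ℝ G (t • u) u) zero_lt_one
    (hcont.comp (continuous_id.smul continuous_const)).continuousOn
    (by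
      intro t ht
      have hne : t • u ≠ 0 := smul_ne_zero ht.1.ne' hu
      have hs : HasDerivAt (fun t : ℝ => t • u) u t := by
        simpa using (hasDerivAt_id t).smul_const u
      exact ((hdiff T hT _ hne).hasFDerivAt.comp_hasDerivAt t hs).sub
        (((hdiff G hG _ hne).hasFDerivAt.comp_hasDerivAt t hs).const_mul lam))
  have h := hlt c hc0 hc1
  rw [hr, div_lt_iff₀ (hGpos _ (smul_ne_zero hc0.ne' hu))] at h
  simp only [map_smul, smul_eq_mul] at h
  simp only [one_smul, zero_smul, h0, sub_zero, div_one] at hc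
  rw [← hc]
  -- `h` is the desired inequality multiplied by `c > 0`.
  nlinarith
end
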